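/- Assume the standing Lyapunov-pair setup for f: Y -> Y with nonempty compact isolated invariant set K, and let B = P_1^{delta_0} (for some sufficiently small delta_0 > 0) be the resulting positively f-invariant, f-admissible isolating neighborhood of K. Let f_n: Y -> Y be continuous maps with f_n -> f, and assume N' is {f_{n_m}}-admissible for every subsequence (f_{n_m}) of (f_n). Set U~ = int(B) and V(a) = {x in U~ : phi(x) < a}. Then: (i) there is a_0 > 0 such that N := cl(V(a_0)) is contained in U~; (ii) there is eps_0 > 0 such that for every 0 < eps <= eps_0 there is n_0(eps) with the property that for all n >= n_0(eps) there exists a closed, positively f_n-invariant set N_n(eps) with K_n contained in V(eps), V(eps) contained in N_n(eps), and N_n(eps) contained in N, where K_n denotes the maximal f_n-invariant set A_{f_n}(N). -/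

import Mathlib

open MeasureTheory Topology Filter Metric Set
open scoped ENNReal NNReal

noncomputable section

variable {Y : Type*}

/-- A set `N` is positively invariant under `g`. -/
def PosInvariant (g : Y → Y) (N : Set Y) : Prop :=
  ∀ x ∈ N, g x ∈ N

/-- There is a full left solution of `g` in `N` through `x` (indexed so that `u n = x_{-n}`). -/
def FullLeftSolution (g : Y → Y) (N : Set Y) (x : Y) : Prop :=
  ∃ u : ℕ → Y, u 0 = x ∧ (∀ k, g (u (k + 1)) = u k) ∧ ∀ k, u k ∈ N

/-- The maximal positively invariant subset `A⁺(N)` of `N`. -/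
def aPlus (g : Y → Y) (N : Set Y) : Set Y :=
  {x | x ∈ N ∧ ∀ k : ℕ, g^[k] x ∈ N}

/-- The maximal negatively invariant subset `A⁻(N)` of `N`. -/
def aMinus (g : Y → Y) (N : Set Y) : Set Y :=
  {x | x ∈ N ∧ FullLeftSolution g N x}

/-- The maximal invariant subset `A(N) = A⁺(N) ∩ A⁻(N)` of `N`. -/
def maxInv (g : Y → Y) (N : Set Y) : Set Y :=
  aPlus g N ∩ aMinus g N

/-- `N` is an isolating neighborhood of the isolated invariant set `K` for `g`. -/
def IsIsolatingNbhd [TopologicalSpace Y] (g : Y → Y) (K N : Set Y) : Prop :=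
  IsClosed N ∧ K ⊆ interior N ∧ maxInv g N = K

/-- `N` is `{gₙ}`-admissible: endpoints of longer and longer orbit segments staying in `N`
have a convergent subsequence. -/
def SeqAdmissible [TopologicalSpace Y] (g : ℕ → Y → Y) (N : Set Y) : Prop :=
  ∀ (x : ℕ → Y) (m : ℕ → ℕ), Tendsto m atTop atTop →
    (∀ n, ∀ k ≤ m n, (g n)^[k] (x n) ∈ N) →
    ∃ (y : Y) (φ : ℕ → ℕ), StrictMono φ ∧
      Tendsto (fun j => (g (φ j))^[m (φ j)] (x (φ j))) atTop (𝓝 y)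

/-- `N` is `g`-admissible. -/
def Admissible [TopologicalSpace Y] (g : Y → Y) (N : Set Y) : Prop :=
  SeqAdmissible (fun _ => g) N

/-- `gₙ → g` in the sense that `gₙ(xₙ) → g(x)` whenever `xₙ → x`. -/
def MapSeqConv [TopologicalSpace Y] (g : ℕ → Y → Y) (f : Y → Y) : Prop :=
  ∀ (x : ℕ → Y) (x₀ : Y), Tendsto x atTop (𝓝 x₀) →
    Tendsto (fun n => g n (x n)) atTop (𝓝 (f x₀))

/-- The set `P₁^ε = N ∩ cl {x ∈ int N' : φ(x) < ε}` from the Lyapunov-pair construction. -/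
def P1set [TopologicalSpace Y] (N N' : Set Y) (φ : Y → ℝ) (ε : ℝ) : Set Y :=
  N ∩ closure {x | x ∈ interior N' ∧ φ x < ε}

/-- The set `V(a) = {x ∈ int B : φ(x) < a}`. -/
def Vset [TopologicalSpace Y] (B : Set Y) (φ : Y → ℝ) (a : ℝ) : Set Y :=
  {x | x ∈ interior B ∧ φ x < a}

/-- The standing Lyapunov-pair setup: a continuous map `f` with a nonempty compact isolated
invariant set `K`, `f`-admissible isolating neighborhoods `N ⊆ int N' ∩ f⁻¹(int N')` with
`A⁻(N) = A(N) = K`, and a Lyapunov pair `(φ, γ)` on a neighborhood `W` of `K`. -/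
structure LyapunovSetup (Y : Type*) [MetricSpace Y] where
  f : Y → Y
  hf : Continuous f
  K : Set Y
  N : Set Y
  N' : Set Y
  W : Set Y
  phi : Y → ℝ
  gam : Y → ℝ
  hK_ne : K.Nonempty
  hK_cpt : IsCompact K
  hN_bdd : Bornology.IsBounded N
  hN'_bdd : Bornology.IsBounded N'
  hN_iso : IsIsolatingNbhd f K N
  hN'_iso : IsIsolatingNbhd f K N'
  hN_adm : Admissible f N
  hN'_adm : Admissible f N'
  hN_sub : N ⊆ interior N' ∩ f ⁻¹' (interior N')
  hAminus : aMinus f N = K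
  hW_nbhd : K ⊆ interior W
  hW_sub : W ⊆ N
  hW_dist : ∃ δ : ℝ, 0 < δ ∧ ∀ x ∈ W, ∀ y ∈ frontier N', δ ≤ dist x y
  hphi_cont : ContinuousOn phi W
  hgam_cont : ContinuousOn gam W
  hphi_nonneg : ∀ x ∈ W, 0 ≤ phi x
  hgam_nonneg : ∀ x ∈ W, 0 ≤ gam x
  hK_zero : ∀ x ∈ K, phi x = 0 ∧ gam x = 0
  hmono : ∀ x ∈ W, f x ∈ W → phi (f x) ≤ phi x ∧ gam x ≤ gam (f x)
  hphi_zero : ∀ x ∈ W, phi x = 0 → x ∈ aMinus f N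
  hphi_seq : ∀ x : ℕ → Y, (∀ n, x n ∈ W) → Tendsto (fun n => phi (x n)) atTop (𝓝 0) →
    ∃ (y : Y) (σ : ℕ → ℕ), StrictMono σ ∧ Tendsto (fun n => x (σ n)) atTop (𝓝 y)
  eps0 : ℝ
  eps0_pos : 0 < eps0
  hP1 : ∀ ε : ℝ, 0 < ε → ε ≤ eps0 →
    K ⊆ interior (P1set N N' phi ε) ∧ P1set N N' phi ε ⊆ W ∧
    (∀ x ∈ P1set N N' phi ε, f x ∈ N → f x ∈ P1set N N' phi ε) ∧
    (∀ x ∈ P1set N N' phi ε, f x ∉ N → ε ≤ gam x)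

/-- Weak convergence of a sequence with respect to an auxiliary topology `τ`. -/
def WConv (τ : TopologicalSpace Y) (u : ℕ → Y) (y : Y) : Prop :=
  Tendsto u atTop (@nhds Y τ y)

/-- The weak ω-limit set of `N` under `g` with respect to the topology `τ`. -/
def omegaWeak (τ : TopologicalSpace Y) (g : Y → Y) (N : Set Y) : Set Y :=
  {y | ∃ (x : ℕ → Y) (m : ℕ → ℕ), (∀ n, x n ∈ N) ∧ Tendsto m atTop atTop ∧
    WConv τ (fun n => g^[m n] (x n)) y}

/-- `K` is a weak attractor for `g` with respect to the weak topology `τ`: it admits a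
positively `g`-invariant isolating neighborhood `N` with `ω^weak(N) ⊆ K`. -/
def IsWeakAttractor [TopologicalSpace Y] (τ : TopologicalSpace Y) (g : Y → Y)
    (K : Set Y) : Prop :=
  ∃ N : Set Y, IsIsolatingNbhd g K N ∧ PosInvariant g N ∧ omegaWeak τ g N ⊆ K

/-- A set is sequentially compact with respect to the topology `τ`. -/
def WSeqCompact (τ : TopologicalSpace Y) (S : Set Y) : Prop :=
  ∀ u : ℕ → Y, (∀ n, u n ∈ S) →
    ∃ y ∈ S, ∃ σ : ℕ → ℕ, StrictMono σ ∧ WConv τ (fun k => u (σ k)) y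

/-!
Since `phi` vanishes on `K` and sequences in `W` along which `phi → 0` accumulate only on `K`, the
sets `V(a)` form a neighborhood basis of `K`; compactness of `K` then yields `a₀`.

Write `C = cl V(a₀)`. By admissibility, the endpoints of longer and longer `fₙ`-orbit segments in
`C` accumulate, and continuous convergence `fₙ → f` lets every such limit be traced backwards inside
the set of these limits, so all of them lie in `A⁻(C) ⊆ K`. Applied to backward orbits in `C`, this
puts the invariant sets `Kₙ` into any given `V(ε)` for large `n`. Applied to the segments before a
first exit from `C`, it shows that `fₙ`-orbits starting close enough to `K` never leave `C`: an exit
would take longer and longer, hence happen from points close to `K`, whose images are close to the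
invariant set `K` again. The closure of the forward `fₙ`-orbit of `V(ε)` is therefore contained
in `C`.
-/

section Invariance

variable {g : Y → Y} {M N : Set Y} {x : Y}

theorem aMinus_mono (h : M ⊆ N) : aMinus g M ⊆ aMinus g N :=
  fun _ ⟨hxM, u, hu₀, hu, huM⟩ => ⟨h hxM, u, hu₀, hu, fun k => h (huM k)⟩

theorem subset_aMinus_of_subset_image (hMN : M ⊆ N) (hM : M ⊆ g '' M) : M ⊆ aMinus g N := by
  intro x hx
  choose p hpM hgp using fun y : M => hM y.2
  let q : M → M := fun y => ⟨p y, hpM y⟩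
  refine ⟨hMN hx, fun k => q^[k] ⟨x, hx⟩, rfl, fun k => ?_, fun k => hMN (q^[k] ⟨x, hx⟩).2⟩
  simp only [Function.iterate_succ_apply']
  exact hgp _

theorem exists_orbitSegment_of_mem_aMinus (hx : x ∈ aMinus g N) (m : ℕ) :
    ∃ z, (∀ k ≤ m, g^[k] z ∈ N) ∧ g^[m] z = x := by
  obtain ⟨-, u, rfl, hu, huN⟩ := hx
  have iterate_u (k l : ℕ) : g^[k] (u (l + k)) = u l := by
    induction k with
    | zero => rfl
    | succ k ih => rw [Function.iterate_succ_apply, ← Nat.add_assoc, hu, ih]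
  refine ⟨u m, fun k hk => ?_, by simpa using iterate_u m 0⟩
  rw [← Nat.sub_add_cancel hk, iterate_u]
  exact huN _

theorem posInvariant_maxInv (g : Y → Y) (N : Set Y) : PosInvariant g (maxInv g N) := by
  rintro x ⟨⟨-, hfwd⟩, -, u, rfl, hu, huN⟩
  refine ⟨⟨hfwd 1, fun k => hfwd (k + 1)⟩, hfwd 1,
    fun k => Nat.casesOn k (g (u 0)) u, rfl, ?_, ?_⟩
  · rintro (_ | k)
    exacts [rfl, hu k]
  · rintro (_ | k)
    exacts [hfwd 1, huN k]

theorem PosInvariant.iterate_mem (hN : PosInvariant g N) (hx : x ∈ N) (k : ℕ) : g^[k] x ∈ N :=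
  MapsTo.iterate hN k hx

theorem PosInvariant.closure [TopologicalSpace Y] (hN : PosInvariant g N) (hg : Continuous g) :
    PosInvariant g (closure N) :=
  MapsTo.closure hN hg

theorem posInvariant_iUnion_iterate_image (g : Y → Y) (N : Set Y) :
    PosInvariant g (⋃ k, g^[k] '' N) := by
  simp only [PosInvariant, mem_iUnion]
  rintro _ ⟨k, x, hx, rfl⟩
  exact ⟨k + 1, x, hx, Function.iterate_succ_apply' g k x⟩

theorem exists_last_iterate_mem (hx : x ∈ N) (hexit : ∃ k, g^[k] x ∉ N) :
    ∃ m, (∀ k ≤ m, g^[k] x ∈ N) ∧ g^[m + 1] x ∉ N := by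
  contrapose! hexit
  intro k
  induction k using Nat.strong_induction_on with
  | _ k ih =>
    rcases k with _ | k
    exacts [hx, hexit k fun j hj => ih j (Nat.lt_succ_of_le hj)]

end Invariance

theorem tendsto_extend_const_cofinite {ι κ : Type*} [TopologicalSpace Y] (s : ι → κ)
    {x : ι → Y} {y : Y} (hx : Tendsto x cofinite (𝓝 y)) :
    Tendsto (Function.extend s x fun _ => y) cofinite (𝓝 y) := by
  classical
  intro U hU
  refine ((mem_cofinite.1 (hx hU)).image s).subset fun b hb => ?_
  by_cases hbs : ∃ i, s i = b
  · rw [mem_compl_iff, mem_preimage, Function.extend_def, dif_pos hbs] at hb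
    exact ⟨hbs.choose, hb, hbs.choose_spec⟩
  · rw [mem_compl_iff, mem_preimage, Function.extend_apply' _ _ _ hbs] at hb
    exact absurd (mem_of_mem_nhds hU) hb

/-- `N` is admissible for every subsequence of `(gₙ)`. Admissibility for `(gₙ)` alone does not
pass to subsequences, since it only tests orbit segments that are given for every `n`. -/
def SubseqAdmissible [TopologicalSpace Y] (g : ℕ → Y → Y) (N : Set Y) : Prop :=
  ∀ σ : ℕ → ℕ, StrictMono σ → SeqAdmissible (fun m => g (σ m)) N

namespace SubseqAdmissible

variable [TopologicalSpace Y] {g : ℕ → Y → Y} {M N : Set Y}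

theorem seqAdmissible (h : SubseqAdmissible g N) : SeqAdmissible g N :=
  h id strictMono_id

theorem mono (h : SubseqAdmissible g N) (hMN : M ⊆ N) : SubseqAdmissible g M :=
  fun σ hσ x m hm hseg => h σ hσ x m hm fun n k hk => hMN (hseg n k hk)

theorem comp (h : SubseqAdmissible g N) {σ : ℕ → ℕ} (hσ : StrictMono σ) :
    SubseqAdmissible (fun n => g (σ n)) N :=
  fun τ hτ => h (fun n => σ (τ n)) (hσ.comp hτ)

end SubseqAdmissible

/-- The limits of the endpoints of longer and longer `gₙ`-orbit segments in `C`, where `n` may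
run through any subsequence. It plays the role of an `ω`-limit set for the sequence `(gₙ)`. -/
def endpointLimits [TopologicalSpace Y] (g : ℕ → Y → Y) (C : Set Y) : Set Y :=
  {y | ∃ (s m : ℕ → ℕ) (x : ℕ → Y), StrictMono s ∧ Tendsto m atTop atTop ∧
    (∀ n, ∀ k ≤ m n, (g (s n))^[k] (x n) ∈ C) ∧
    Tendsto (fun n => (g (s n))^[m n] (x n)) atTop (𝓝 y)}

theorem endpointLimits_subset [TopologicalSpace Y] (g : ℕ → Y → Y) {C : Set Y}
    (hC : IsClosed C) : endpointLimits g C ⊆ C := by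
  rintro y ⟨s, m, x, -, -, hseg, hlim⟩
  exact hC.mem_of_tendsto hlim (Eventually.of_forall fun n => hseg n _ le_rfl)

namespace MapSeqConv

variable [TopologicalSpace Y] {g : ℕ → Y → Y} {f : Y → Y} {C K : Set Y}

-- Points given only along `s` are extended by their limit to a sequence indexed by all of `ℕ`.
theorem comp (hg : MapSeqConv g f) {s : ℕ → ℕ} (hs : StrictMono s) :
    MapSeqConv (fun n => g (s n)) f := by
  intro x x₀ hx
  rw [← Nat.cofinite_eq_atTop] at hx
  have hext := tendsto_extend_const_cofinite s hx
  rw [Nat.cofinite_eq_atTop] at hext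
  simpa [Function.comp_def, hs.injective.extend_apply] using
    (hg _ x₀ hext).comp hs.tendsto_atTop

theorem iterate (hg : MapSeqConv g f) (k : ℕ) : MapSeqConv (fun n => (g n)^[k]) f^[k] := by
  induction k with
  | zero => exact fun _ _ hx => hx
  | succ _ ih => exact fun x x₀ hx => ih (fun n => g n (x n)) (f x₀) (hg x x₀ hx)

theorem endpointLimits_subset_image [T2Space Y] (hg : MapSeqConv g f)
    (hadm : SubseqAdmissible g C) : endpointLimits g C ⊆ f '' endpointLimits g C := by
  rintro y ⟨s, m, x, hs, hm, hseg, hlim⟩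
  have hm' : Tendsto (fun n => m n - 1) atTop atTop := (tendsto_sub_atTop_nat 1).comp hm
  have hseg' (n k : ℕ) (hk : k ≤ m n - 1) : (g (s n))^[k] (x n) ∈ C :=
    hseg n k (hk.trans (Nat.sub_le _ _))
  obtain ⟨y', ψ, hψ, hlim'⟩ := hadm s hs x _ hm' hseg'
  refine ⟨y', ⟨s ∘ ψ, (m · - 1) ∘ ψ, x ∘ ψ, hs.comp hψ, hm'.comp hψ.tendsto_atTop,
    fun n => hseg' (ψ n), hlim'⟩, ?_⟩
  refine tendsto_nhds_unique ((hg.comp (hs.comp hψ) _ _ hlim').congr' ?_)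
    (hlim.comp hψ.tendsto_atTop)
  filter_upwards [(hm.comp hψ.tendsto_atTop).eventually_ge_atTop 1] with n (hn : 1 ≤ m (ψ n))
  change g (s (ψ n)) ((g (s (ψ n)))^[m (ψ n) - 1] (x (ψ n))) = (g (s (ψ n)))^[m (ψ n)] (x (ψ n))
  rw [← Function.iterate_succ_apply' (g (s (ψ n))), Nat.succ_eq_add_one, Nat.sub_add_cancel hn]

theorem exists_subseq_tendsto_mem_aMinus [T2Space Y] (hg : MapSeqConv g f) (hC : IsClosed C)
    (hadm : SubseqAdmissible g C) {x : ℕ → Y} {m : ℕ → ℕ} (hm : Tendsto m atTop atTop)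
    (hseg : ∀ n, ∀ k ≤ m n, (g n)^[k] (x n) ∈ C) :
    ∃ y ∈ aMinus f C, ∃ ψ : ℕ → ℕ, StrictMono ψ ∧
      Tendsto (fun n => (g (ψ n))^[m (ψ n)] (x (ψ n))) atTop (𝓝 y) := by
  obtain ⟨y, ψ, hψ, hlim⟩ := hadm.seqAdmissible x m hm hseg
  have hy : y ∈ endpointLimits g C :=
    ⟨ψ, m ∘ ψ, x ∘ ψ, hψ, hm.comp hψ.tendsto_atTop, fun n => hseg (ψ n), hlim⟩
  exact ⟨y, subset_aMinus_of_subset_image (endpointLimits_subset g hC)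
    (hg.endpointLimits_subset_image hadm) hy, ψ, hψ, hlim⟩

theorem eventually_aMinus_subset [T2Space Y] (hg : MapSeqConv g f) (hC : IsClosed C)
    (hadm : SubseqAdmissible g C) {U : Set Y} (hU : U ∈ 𝓝ˢ (aMinus f C)) :
    ∀ᶠ n in atTop, aMinus (g n) C ⊆ U := by
  by_contra hnot
  obtain ⟨s, hs, hbad⟩ := extraction_of_frequently_atTop (not_eventually.1 hnot)
  choose x hx hxU using fun n => not_subset.1 (hbad n)
  choose z hseg hend using fun n => exists_orbitSegment_of_mem_aMinus (hx n) n
  obtain ⟨y, hy, ψ, -, hlim⟩ :=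
    (hg.comp hs).exists_subseq_tendsto_mem_aMinus hC (hadm.comp hs) tendsto_id hseg
  simp only [id_eq, hend] at hlim
  obtain ⟨n, hn⟩ := (hlim.eventually_mem (mem_nhdsSet_iff_forall.1 hU y hy)).exists
  exact hxU _ hn

theorem eventually_forall_le_iterate_mem (hg : MapSeqConv g f) (hK : PosInvariant f K)
    (hCK : C ∈ 𝓝ˢ K) {x : ℕ → Y} {y : Y} (hy : y ∈ K) (hx : Tendsto x atTop (𝓝 y)) (b : ℕ) :
    ∀ᶠ n in atTop, ∀ k ≤ b, (g n)^[k] (x n) ∈ C :=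
  (eventually_all_finite (finite_le_nat b)).2 fun k _ =>
    (hg.iterate k x y hx).eventually_mem
      (mem_nhdsSet_iff_forall.1 hCK _ (hK.iterate_mem hy k))

theorem exists_forall_iterate_mem [T2Space Y] (hg : MapSeqConv g f) (hC : IsClosed C)
    (hadm : SubseqAdmissible g C) (hK : PosInvariant f K) (hCK : C ∈ 𝓝ˢ K)
    (haK : aMinus f C ⊆ K) {x : ℕ → Y} {y : Y} (hy : y ∈ K) (hx : Tendsto x atTop (𝓝 y))
    (hxC : ∀ n, x n ∈ C) : ∃ n, ∀ k, (g n)^[k] (x n) ∈ C := by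
  by_contra! hexit
  choose m hseg hout using fun n => exists_last_iterate_mem (hxC n) (hexit n)
  have hm : Tendsto m atTop atTop := by
    refine tendsto_atTop.2 fun b => ?_
    filter_upwards [hg.eventually_forall_le_iterate_mem hK hCK hy hx b] with n hn
    by_contra! hlt
    exact hout n (hn _ hlt)
  obtain ⟨w, hw, ψ, hψ, hlim⟩ := hg.exists_subseq_tendsto_mem_aMinus hC hadm hm hseg
  have hnhds : C ∈ 𝓝 (f w) := mem_nhdsSet_iff_forall.1 hCK _ (hK w (haK hw))
  obtain ⟨n, hn⟩ := ((hg.comp hψ _ _ hlim).eventually_mem hnhds).exists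
  exact hout (ψ n) (by rwa [Function.iterate_succ_apply'])

theorem eventually_forall_iterate_mem [T2Space Y] [FirstCountableTopology Y]
    (hg : MapSeqConv g f) (hC : IsClosed C) (hadm : SubseqAdmissible g C) (hKc : IsCompact K)
    (hK : PosInvariant f K) (hCK : C ∈ 𝓝ˢ K) (haK : aMinus f C ⊆ K) :
    ∀ᶠ p in atTop ×ˢ 𝓝ˢ K, ∀ k, (g p.1)^[k] p.2 ∈ C := by
  refine hKc.mem_prod_nhdsSet_of_forall fun y hy => ?_
  by_contra hnot
  have hnear : ∀ᶠ p : ℕ × Y in atTop ×ˢ 𝓝 y, p.2 ∈ C :=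
    tendsto_snd.eventually_mem (mem_nhdsSet_iff_forall.1 hCK y hy)
  obtain ⟨p, hp, hbad⟩ :=
    exists_seq_forall_of_frequently ((not_eventually.1 hnot).and_eventually hnear)
  obtain ⟨φ, hφ, hs⟩ := strictMono_subseq_of_tendsto_atTop (tendsto_fst.comp hp)
  obtain ⟨n, hn⟩ := (hg.comp hs).exists_forall_iterate_mem hC (hadm.comp hs) hK hCK haK hy
    ((tendsto_snd.comp hp).comp hφ.tendsto_atTop) fun n => (hbad (φ n)).2
  exact (hbad (φ n)).1 hn

theorem exists_nhdsSet_forall_subset_eventually_posInvariant [T2Space Y]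
    [FirstCountableTopology Y] (hg : MapSeqConv g f) (hgc : ∀ n, Continuous (g n))
    (hC : IsClosed C) (hadm : SubseqAdmissible g C) (hKc : IsCompact K) (hK : PosInvariant f K)
    (hCK : C ∈ 𝓝ˢ K) (haK : aMinus f C ⊆ K) :
    ∃ U ∈ 𝓝ˢ K, ∀ V ∈ 𝓝ˢ K, V ⊆ U → ∀ᶠ n in atTop, ∃ M : Set Y,
      IsClosed M ∧ PosInvariant (g n) M ∧ maxInv (g n) C ⊆ V ∧ V ⊆ M ∧ M ⊆ C := by
  obtain ⟨P, hP, Q, hQ, hPQ⟩ :=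
    eventually_prod_iff.1 (hg.eventually_forall_iterate_mem hC hadm hKc hK hCK haK)
  refine ⟨{x | Q x}, hQ, fun V hV hVQ => ?_⟩
  filter_upwards [hP, hg.eventually_aMinus_subset hC hadm (nhdsSet_mono haK hV)] with n hn hmax
  have horbit : ⋃ k, (g n)^[k] '' V ⊆ C :=
    iUnion_subset fun k => image_subset_iff.2 fun x hx => hPQ hn (hVQ hx) k
  refine ⟨closure (⋃ k, (g n)^[k] '' V), isClosed_closure,
    (posInvariant_iUnion_iterate_image (g n) V).closure (hgc n),
    inter_subset_right.trans hmax, fun x hx => ?_, closure_minimal horbit hC⟩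
  exact subset_closure (mem_iUnion.2 ⟨0, x, hx, rfl⟩)

end MapSeqConv

theorem Vset_mono [TopologicalSpace Y] (B : Set Y) (φ : Y → ℝ) : Monotone (Vset B φ) :=
  fun _ _ hab _ hx => ⟨hx.1, hx.2.trans_le hab⟩

namespace LyapunovSetup

variable [MetricSpace Y] (S : LyapunovSetup Y)

theorem posInvariant_K : PosInvariant S.f S.K := by
  rw [← S.hN_iso.2.2]
  exact posInvariant_maxInv S.f S.N

theorem mem_W_of_mem_closure {x : Y} (hxN : x ∈ S.N)
    (hx : x ∈ closure {z ∈ S.N | S.phi z < S.eps0}) : x ∈ S.W := by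
  refine (S.hP1 S.eps0 S.eps0_pos le_rfl).2.1 ⟨hxN, closure_mono ?_ hx⟩
  rintro z ⟨hzN, hz⟩
  exact ⟨(S.hN_sub hzN).1, hz⟩

theorem exists_subseq_tendsto_mem_K {x : ℕ → Y} (hx : ∀ n, x n ∈ S.W)
    (hphi : Tendsto (fun n => S.phi (x n)) atTop (𝓝 0)) :
    ∃ y ∈ S.K, ∃ σ : ℕ → ℕ, StrictMono σ ∧ Tendsto (fun n => x (σ n)) atTop (𝓝 y) := by
  obtain ⟨y, σ, hσ, hy⟩ := S.hphi_seq x hx hphi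
  have hphiσ := hphi.comp hσ.tendsto_atTop
  have hyN : y ∈ S.N :=
    S.hN_iso.1.mem_of_tendsto hy (Eventually.of_forall fun n => S.hW_sub (hx (σ n)))
  have hyW : y ∈ S.W := by
    refine S.mem_W_of_mem_closure hyN (mem_closure_of_tendsto hy ?_)
    filter_upwards [hphiσ.eventually_lt_const S.eps0_pos] with n hn
    exact ⟨S.hW_sub (hx (σ n)), hn⟩
  have hphi_y : Tendsto (fun n => S.phi (x (σ n))) atTop (𝓝 (S.phi y)) :=
    (S.hphi_cont y hyW).tendsto.comp
      (tendsto_nhdsWithin_iff.2 ⟨hy, Eventually.of_forall fun n => hx (σ n)⟩)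
  refine ⟨y, ?_, σ, hσ, hy⟩
  rw [← S.hAminus]
  exact S.hphi_zero y hyW (tendsto_nhds_unique hphi_y hphiσ)

theorem Vset_mem_nhdsSet {B : Set Y} (hKB : S.K ⊆ interior B) {a : ℝ} (ha : 0 < a) :
    Vset B S.phi a ∈ 𝓝ˢ S.K := by
  have hopen : IsOpen (interior S.W ∩ S.phi ⁻¹' Iio a) :=
    (S.hphi_cont.mono interior_subset).isOpen_inter_preimage isOpen_interior isOpen_Iio
  have hK : S.K ⊆ interior S.W ∩ S.phi ⁻¹' Iio a :=
    fun x hx => ⟨S.hW_nbhd hx, by simpa [(S.hK_zero x hx).1] using ha⟩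
  filter_upwards [isOpen_interior.mem_nhdsSet.2 hKB, hopen.mem_nhdsSet.2 hK] with x hxB hx
  exact ⟨hxB, hx.2⟩

theorem exists_Vset_subset {B U : Set Y} (hBN : B ⊆ S.N) (hU : U ∈ 𝓝ˢ S.K) :
    ∃ a, 0 < a ∧ Vset B S.phi a ⊆ U := by
  by_contra! hnot
  obtain ⟨a, -, ha, ha₀⟩ := exists_seq_strictAnti_tendsto' S.eps0_pos
  choose x hx hxU using fun n => not_subset.1 (hnot (a n) (ha n).1)
  have hxN (n : ℕ) : x n ∈ S.N := hBN (interior_subset (hx n).1)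
  have hxW (n : ℕ) : x n ∈ S.W :=
    S.mem_W_of_mem_closure (hxN n) (subset_closure ⟨hxN n, (hx n).2.trans (ha n).2⟩)
  have hphi : Tendsto (fun n => S.phi (x n)) atTop (𝓝 0) :=
    squeeze_zero (fun n => S.hphi_nonneg _ (hxW n)) (fun n => (hx n).2.le) ha₀
  obtain ⟨y, hy, σ, -, hlim⟩ := S.exists_subseq_tendsto_mem_K hxW hphi
  obtain ⟨n, hn⟩ := (hlim.eventually_mem (mem_nhdsSet_iff_forall.1 hU y hy)).exists
  exact hxU _ hn

theorem exists_closure_Vset_subset {B U : Set Y} (hBN : B ⊆ S.N) (hU : U ∈ 𝓝ˢ S.K) :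
    ∃ a, 0 < a ∧ closure (Vset B S.phi a) ⊆ U := by
  obtain ⟨O, hO, hKO, hOU⟩ := normal_exists_closure_subset S.hK_cpt.isClosed isOpen_interior
    (subset_interior_iff_mem_nhdsSet.2 hU)
  obtain ⟨a, ha, haO⟩ := S.exists_Vset_subset hBN (hO.mem_nhdsSet.2 hKO)
  exact ⟨a, ha, (closure_mono haO).trans (hOU.trans interior_subset)⟩

end LyapunovSetup

theorem continuation_of_positively_invariant_nbhd_general [MetricSpace Y] (S : LyapunovSetup Y)
    {B : Set Y} (hBN : B ⊆ S.N) (hKB : S.K ⊆ interior B)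
    {fn : ℕ → Y → Y} (hfn_cont : ∀ n, Continuous (fn n)) (hfn_conv : MapSeqConv fn S.f)
    (hN'_adm : SubseqAdmissible fn S.N') :
    ∃ a₀ : ℝ, 0 < a₀ ∧ closure (Vset B S.phi a₀) ⊆ interior B ∧
      ∃ ε₀ : ℝ, 0 < ε₀ ∧ ∀ ε : ℝ, 0 < ε → ε ≤ ε₀ → ∃ n₀ : ℕ, ∀ n, n₀ ≤ n →
        ∃ Nn : Set Y, IsClosed Nn ∧ PosInvariant (fn n) Nn ∧
          maxInv (fn n) (closure (Vset B S.phi a₀)) ⊆ Vset B S.phi ε ∧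
          Vset B S.phi ε ⊆ Nn ∧ Nn ⊆ closure (Vset B S.phi a₀) := by
  obtain ⟨a₀, ha₀, hCB⟩ := S.exists_closure_Vset_subset hBN (isOpen_interior.mem_nhdsSet.2 hKB)
  have hCN : closure (Vset B S.phi a₀) ⊆ S.N := hCB.trans (interior_subset.trans hBN)
  have hCN' : closure (Vset B S.phi a₀) ⊆ S.N' :=
    fun x hx => interior_subset (S.hN_sub (hCN hx)).1
  have hCK : closure (Vset B S.phi a₀) ∈ 𝓝ˢ S.K :=
    mem_of_superset (S.Vset_mem_nhdsSet hKB ha₀) subset_closure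
  obtain ⟨U, hU, hUinv⟩ := hfn_conv.exists_nhdsSet_forall_subset_eventually_posInvariant
    hfn_cont isClosed_closure (hN'_adm.mono hCN') S.hK_cpt S.posInvariant_K hCK
    ((aMinus_mono hCN).trans S.hAminus.subset)
  obtain ⟨ε₀, hε₀, hVU⟩ := S.exists_Vset_subset hBN hU
  exact ⟨a₀, ha₀, hCB, ε₀, hε₀, fun ε hε hεε₀ => eventually_atTop.1 <|
    hUinv _ (S.Vset_mem_nhdsSet hKB hε) ((Vset_mono B S.phi hεε₀).trans hVU)⟩

/-- **Continuation of the positively invariant neighborhood** under perturbations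
`fₙ → f`: with `B = P₁^{δ₀}` the positively `f`-invariant admissible isolating
neighborhood of `K`, `Ũ = int B` and `V(a) = {x ∈ Ũ : φ(x) < a}`, there is `a₀ > 0` with
`N := cl V(a₀) ⊆ Ũ`, and there is `ε₀ > 0` such that for all `0 < ε ≤ ε₀` and all large
`n` there is a closed, positively `fₙ`-invariant set `Nₙ(ε)` with
`Kₙ ⊆ V(ε) ⊆ Nₙ(ε) ⊆ N`, where `Kₙ = A_{fₙ}(N)`. -/
theorem continuation_of_positively_invariant_nbhd
    {Y : Type*} [MetricSpace Y] [CompleteSpace Y] [TopologicalSpace.SeparableSpace Y]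
    (S : LyapunovSetup Y)
    (δ₀ : ℝ) (hδ₀ : 0 < δ₀)
    (hB_pos : PosInvariant S.f (P1set S.N S.N' S.phi δ₀))
    (hB_adm : Admissible S.f (P1set S.N S.N' S.phi δ₀))
    (hB_iso : IsIsolatingNbhd S.f S.K (P1set S.N S.N' S.phi δ₀))
    (fn : ℕ → Y → Y) (hfn_cont : ∀ n, Continuous (fn n))
    (hfn_conv : MapSeqConv fn S.f)
    (hN'_adm : ∀ σ : ℕ → ℕ, StrictMono σ → SeqAdmissible (fun m => fn (σ m)) S.N') :
    ∃ a₀ : ℝ, 0 < a₀ ∧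
      closure (Vset (P1set S.N S.N' S.phi δ₀) S.phi a₀)
        ⊆ interior (P1set S.N S.N' S.phi δ₀) ∧
      ∃ ε₀ : ℝ, 0 < ε₀ ∧ ∀ ε : ℝ, 0 < ε → ε ≤ ε₀ → ∃ n₀ : ℕ, ∀ n, n₀ ≤ n →
        ∃ Nn : Set Y, IsClosed Nn ∧ PosInvariant (fn n) Nn ∧
          maxInv (fn n) (closure (Vset (P1set S.N S.N' S.phi δ₀) S.phi a₀))
            ⊆ Vset (P1set S.N S.N' S.phi δ₀) S.phi ε ∧
          Vset (P1set S.N S.N' S.phi δ₀) S.phi ε ⊆ Nn ∧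
          Nn ⊆ closure (Vset (P1set S.N S.N' S.phi δ₀) S.phi a₀) :=
  continuation_of_positively_invariant_nbhd_general S inter_subset_left hB_iso.2.1 hfn_cont
    hfn_conv hN'_adm
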